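/- The set M_f^∞ of off-diagonally finite measures is closed in the complete metric space (M^∞, OT_∞), and hence (M_f^∞, OT_∞) is a complete metric space. -/

import Mathlib

/-! Common setup: the birth-death plane, Radon measures, partial optimal transport. -/

noncomputable section

open MeasureTheory Topology Filter Set
open scoped ENNReal

/-- The ambient plane `ℝ²` (with the sup-norm, i.e. `q = ∞`). -/
abbrev P2 : Type := ℝ × ℝ

/-- The birth-death plane `W = {(b,d) : b < d}`. -/
def Wbd : Set P2 := {p | p.1 < p.2}

/-- The closure `W̄` of the birth-death plane. -/
def Wcl : Set P2 := closure Wbd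

/-- The diagonal `Δ`. -/
def Diag : Set P2 := {p | p.1 = p.2}

/-- Distance from a point to the diagonal, `‖x - Δ‖`. -/
def distDiag (x : P2) : ℝ := Metric.infDist x Diag

/-- The pseudometric `d(x,y) = min(‖x-y‖, ‖x-Δ‖ + ‖y-Δ‖)` on `W̄`. -/
def dW (x y : P2) : ℝ := min (dist x y) (distDiag x + distDiag y)

/-- The support of a Borel measure: points all of whose neighborhoods have
positive measure. -/
def msupport {α : Type*} [TopologicalSpace α] [MeasurableSpace α] (μ : Measure α) : Set α :=
  {x | ∀ U ∈ 𝓝 x, 0 < μ U}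

/-- `μ` is a Radon measure on the subspace `S`: it vanishes off `S`, is inner regular
(on relatively open sets) by compact sets, outer regular (by relatively open sets), and finite
on compact subsets of `S`. -/
def RadonOn {α : Type*} [TopologicalSpace α] [MeasurableSpace α] (S : Set α)
    (μ : Measure α) : Prop :=
  μ Sᶜ = 0 ∧
  (∀ U : Set α, IsOpen U → μ (U ∩ S) = ⨆ (K : Set α) (_ : K ⊆ U ∩ S) (_ : IsCompact K), μ K) ∧
  (∀ E : Set α, E ⊆ S → MeasurableSet E →
    μ E = ⨅ (U : Set α) (_ : IsOpen U) (_ : E ⊆ U), μ (U ∩ S)) ∧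
  (∀ K : Set α, K ⊆ S → IsCompact K → μ K < ⊤)

/-- The set `M` of Radon measures on `W`. -/
def MRadon : Set (Measure P2) := {μ | RadonOn Wbd μ}

/-- `pers_∞(μ) = sup{‖x-Δ‖ : x ∈ spt μ}` (valued in `ℝ≥0∞`). -/
def persInf (μ : Measure P2) : ℝ≥0∞ := ⨆ x ∈ msupport μ, ENNReal.ofReal (distDiag x)

/-- The space `M^∞` of Radon measures on `W` with finite `∞`-persistence. -/
def MInf : Set (Measure P2) := {μ | RadonOn Wbd μ ∧ persInf μ < ⊤}

/-- A coupling (admissible transport plan) between `μ` and `ν`: a Radon measure on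
`W̄ × W̄` whose marginals restricted to Borel subsets of `W` are `μ` and `ν`. -/
def IsCoupling (π : Measure (P2 × P2)) (μ ν : Measure P2) : Prop :=
  RadonOn (Wcl ×ˢ Wcl) π ∧
  (∀ A : Set P2, A ⊆ Wbd → MeasurableSet A → π (A ×ˢ Wcl) = μ A) ∧
  (∀ B : Set P2, B ⊆ Wbd → MeasurableSet B → π (Wcl ×ˢ B) = ν B)

/-- The `∞`-cost of a transport plan: `sup {d(x,y) : (x,y) ∈ spt π}`. -/
def costInf (π : Measure (P2 × P2)) : ℝ≥0∞ :=
  ⨆ p ∈ msupport π, ENNReal.ofReal (dW p.1 p.2)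

/-- The partial `∞`-optimal transport distance. -/
def OT (μ ν : Measure P2) : ℝ≥0∞ :=
  ⨅ (π : Measure (P2 × P2)) (_ : IsCoupling π μ ν), costInf π

/-- `W_ε = {(x,y) : y - x > ε}`. -/
def Weps (ε : ℝ) : Set P2 := {p | p.2 - p.1 > ε}

/-- The space `M_f^∞` of off-diagonally finite measures. -/
def Mf : Set (Measure P2) := {μ | μ ∈ MInf ∧ ∀ ε : ℝ, 0 < ε → μ (Weps ε) < ⊤}

/-- The space `M_fin^∞` of finite measures in `M^∞`. -/
def Mfin : Set (Measure P2) := {μ | μ ∈ MInf ∧ μ Wbd < ⊤}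

/-- `f ∈ C_c(W)`: a continuous function, compactly supported, with support contained
in the open set `W` (extended by zero to the plane). -/
def IsCcW (f : P2 → ℝ) : Prop :=
  Continuous f ∧ HasCompactSupport f ∧ tsupport f ⊆ Wbd

/-- Convergence of a sequence of measures to `μ` in the distance `OT_∞`. -/
def OTConv (u : ℕ → Measure P2) (μ : Measure P2) : Prop :=
  Tendsto (fun n => OT (u n) μ) atTop (𝓝 0)

/-!
A plan of small cost moves mass that is far from the diagonal only a little, since the other way to
be cheap, through the diagonal, is not available to it. Hence `OT μ ν < r` bounds `ν (Weps ε)` by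
`μ (Weps (ε - 2 * r))`, and off-diagonal finiteness passes to limits.

For completeness, the same bound makes a Cauchy sequence locally bounded, so it has a vague limit
along an ultrafilter. It converges to this limit because `OT` is lower semicontinuous for vague
convergence. Indeed, near-optimal couplings restricted to the pairs with a point far from the
diagonal live where both projections are proper, so they have a vague limit whose marginals can be
controlled, and the mass that is left over lies close to the diagonal. It is sent to the diagonal
along a proper map, to keep the resulting coupling locally finite.
-/

/-! ### Supports and essential suprema -/

theorem msupport_eq_support {X : Type*} [TopologicalSpace X] [MeasurableSpace X] (μ : Measure X) :
    msupport μ = μ.support := by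
  ext x
  exact (Measure.mem_support_iff_forall x).symm

theorem iSup_msupport_le_iff {X α : Type*} [TopologicalSpace X] [HereditarilyLindelofSpace X]
    [MeasurableSpace X] [CompleteLinearOrder α] {μ : Measure X} {g : X → α}
    (hg : LowerSemicontinuous g) {c : α} :
    ⨆ x ∈ msupport μ, g x ≤ c ↔ ∀ᵐ x ∂μ, g x ≤ c := by
  rw [msupport_eq_support, iSup₂_le_iff]
  refine ⟨fun h => ?_, fun h => Measure.support_subset_of_isClosed (hg.isClosed_preimage c) h⟩
  filter_upwards [Measure.support_mem_ae] with x hx using h x hx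

/-! ### Radon measures on a subspace -/

section RadonOn

variable {X : Type*} [TopologicalSpace X] [MeasurableSpace X] {S : Set X}

theorem radonOn_map_subtype_val (hS : MeasurableSet S) (m : Measure S) [m.Regular] :
    RadonOn S (m.map Subtype.val) := by
  have hemb := MeasurableEmbedding.subtype_coe hS
  refine ⟨?_, fun U hU => le_antisymm ?_ ?_, fun E hE _ => le_antisymm ?_ ?_, fun K hKS hK => ?_⟩
  · rw [hemb.map_apply, preimage_compl, Subtype.coe_preimage_self, compl_univ, measure_empty]
  · rw [hemb.map_apply, Subtype.preimage_coe_inter_self,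
      (hU.preimage continuous_subtype_val).measure_eq_iSup_isCompact]
    refine iSup₂_le fun K hKU => iSup_le fun hK => ?_
    refine le_iSup₂_of_le (Subtype.val '' K) ?_ (le_iSup_of_le (hK.image continuous_subtype_val) ?_)
    · exact subset_inter (image_subset_iff.2 hKU) (Subtype.coe_image_subset S K)
    · rw [hemb.map_apply, preimage_image_eq _ Subtype.val_injective]
  · exact iSup₂_le fun K hKU => iSup_le fun _ => measure_mono hKU
  · exact le_iInf₂ fun U _ => le_iInf fun hEU => measure_mono (subset_inter hEU hE)
  · rw [hemb.map_apply, Set.measure_eq_iInf_isOpen]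
    refine le_iInf₂ fun V hV => le_iInf fun hVo => ?_
    obtain ⟨U, hU, rfl⟩ := isOpen_induced_iff.1 hVo
    refine iInf₂_le_of_le U hU (iInf_le_of_le (fun x hx => hV (a := ⟨x, hE hx⟩) hx) ?_)
    rw [hemb.map_apply, Subtype.preimage_coe_inter_self]
  · rw [hemb.map_apply]
    refine IsCompact.measure_lt_top ?_
    rwa [Subtype.isCompact_iff, Subtype.image_preimage_coe, inter_eq_right.2 hKS]

theorem isFiniteMeasureOnCompacts_comap_subtype_val (hS : MeasurableSet S) {μ : Measure X}
    (hμ : ∀ K ⊆ S, IsCompact K → μ K < ⊤) :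
    IsFiniteMeasureOnCompacts (μ.comap (Subtype.val : S → X)) := by
  refine ⟨fun K hK => ?_⟩
  rw [(MeasurableEmbedding.subtype_coe hS).comap_apply]
  exact hμ _ (Subtype.coe_image_subset S K) (hK.image continuous_subtype_val)

theorem measurableSet_of_isLocallyClosed [OpensMeasurableSpace X] (hS : IsLocallyClosed S) :
    MeasurableSet S := by
  obtain ⟨U, Z, hU, hZ, rfl⟩ := hS
  exact hU.measurableSet.inter hZ.measurableSet

variable [SecondCountableTopology X] [LocallyCompactSpace X]

theorem RadonOn.sigmaFinite [OpensMeasurableSpace X] (hS : IsLocallyClosed S) {μ : Measure X}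
    (hμ : RadonOn S μ) : SigmaFinite μ := by
  have hSm := measurableSet_of_isLocallyClosed hS
  have := hS.locallyCompactSpace
  have := isFiniteMeasureOnCompacts_comap_subtype_val hSm hμ.2.2.2
  rw [← Measure.restrict_eq_self_of_ae_mem (s := S) hμ.1, ← map_comap_subtype_coe hSm]
  exact (MeasurableEmbedding.subtype_coe hSm).sigmaFinite_map

variable [BorelSpace X] [TopologicalSpace.PseudoMetrizableSpace X]

theorem radonOn_restrict (hS : IsLocallyClosed S) {μ : Measure X}
    (hμ : ∀ K ⊆ S, IsCompact K → μ K < ⊤) : RadonOn S (μ.restrict S) := by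
  have hSm := measurableSet_of_isLocallyClosed hS
  have := hS.locallyCompactSpace
  have := isFiniteMeasureOnCompacts_comap_subtype_val hSm hμ
  rw [← map_comap_subtype_coe hSm]
  exact radonOn_map_subtype_val hSm _

theorem radonOn_of_isCompact_lt_top (hS : IsLocallyClosed S) {μ : Measure X} (hμ₀ : μ Sᶜ = 0)
    (hμ : ∀ K ⊆ S, IsCompact K → μ K < ⊤) : RadonOn S μ := by
  rw [← Measure.restrict_eq_self_of_ae_mem (s := S) hμ₀]
  exact radonOn_restrict hS hμ

theorem RadonOn.of_le (hS : IsLocallyClosed S) {μ ν : Measure X} (hν : RadonOn S ν) (h : μ ≤ ν) :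
    RadonOn S μ :=
  radonOn_of_isCompact_lt_top hS (Measure.absolutelyContinuous_of_le h hν.1)
    fun K hKS hK => (h K).trans_lt (hν.2.2.2 K hKS hK)

end RadonOn

theorem measure_sub_add_cancel_of_le {X : Type*} [MeasurableSpace X] {μ ν : Measure X}
    [SigmaFinite ν] (h : ν ≤ μ) : μ - ν + ν = μ := by
  rw [← sum_restrict_disjointed_spanningSets (μ - ν + ν) ν]
  conv_rhs => rw [← sum_restrict_disjointed_spanningSets μ ν]
  congr 1
  funext n
  have hS : MeasurableSet (disjointed (spanningSets ν) n) :=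
    MeasurableSet.disjointed (measurableSet_spanningSets ν) n
  have : IsFiniteMeasure (ν.restrict (disjointed (spanningSets ν) n)) :=
    isFiniteMeasure_restrict.2 ((measure_mono (disjointed_subset _ n)).trans_lt
      (measure_spanningSets_lt_top ν n)).ne
  rw [Measure.restrict_add, Measure.restrict_sub_eq_restrict_sub_restrict hS,
    Measure.sub_add_cancel_of_le (Measure.restrict_mono subset_rfl h)]

/-! ### Vague limits -/

/-- Vague convergence to `μ` of the measures `m k` along `l` inside the set `V`, encoded by the
portmanteau inequalities on the open and on the compact subsets of `V`. -/
structure IsVagueLim {ι X : Type*} [TopologicalSpace X] [MeasurableSpace X] (l : Filter ι)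
    (V : Set X) (m : ι → Measure X) (μ : Measure X) : Prop where
  le_liminf : ∀ O ⊆ V, IsOpen O → μ O ≤ liminf (fun k => m k O) l
  limsup_le : ∀ K ⊆ V, IsCompact K → limsup (fun k => m k K) l ≤ μ K

namespace IsVagueLim

variable {ι X : Type*} [TopologicalSpace X] [MeasurableSpace X] {l : Filter ι} {V : Set X}
  {m : ι → Measure X} {μ : Measure X}

theorem const (l : Filter ι) [l.NeBot] (V : Set X) (μ : Measure X) :
    IsVagueLim l V (fun _ => μ) μ :=
  ⟨fun _ _ _ => (liminf_const _).ge, fun _ _ _ => (limsup_const _).le⟩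

theorem mono_filter (h : IsVagueLim l V m μ) {l' : Filter ι} (hl : l' ≤ l) :
    IsVagueLim l' V m μ :=
  ⟨fun O hOV hO => (h.le_liminf O hOV hO).trans (liminf_le_liminf_of_le hl),
    fun K hKV hK => (limsup_le_limsup_of_le hl).trans (h.limsup_le K hKV hK)⟩

theorem mono (h : IsVagueLim l V m μ) {V' : Set X} (hV : V' ⊆ V) : IsVagueLim l V' m μ :=
  ⟨fun O hOV => h.le_liminf O (hOV.trans hV), fun K hKV => h.limsup_le K (hKV.trans hV)⟩

theorem restrict (h : IsVagueLim l V m μ) : IsVagueLim l V m (μ.restrict V) := by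
  refine ⟨fun O hOV hO => ?_, fun K hKV hK => ?_⟩
  · rw [Measure.restrict_eq_self _ hOV]
    exact h.le_liminf O hOV hO
  · rw [Measure.restrict_eq_self _ hKV]
    exact h.limsup_le K hKV hK

theorem measure_le [l.NeBot] (h : IsVagueLim l V m μ) {O : Set X} (hOV : O ⊆ V) (hO : IsOpen O)
    {c : ℝ≥0∞} (hc : ∀ᶠ k in l, m k O ≤ c) : μ O ≤ c :=
  (h.le_liminf O hOV hO).trans (liminf_le_of_frequently_le hc.frequently)

theorem ae_mem_of_isClosed [l.NeBot] (h : IsVagueLim l univ m μ) {D : Set X} (hD : IsClosed D)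
    (hm : ∀ᶠ k in l, ∀ᵐ x ∂m k, x ∈ D) : ∀ᵐ x ∂μ, x ∈ D :=
  nonpos_iff_eq_zero.1 (h.measure_le (subset_univ _) hD.isOpen_compl (hm.mono fun _ hk => hk.le))

theorem map_subtype_val [BorelSpace X] (hV : IsOpen V) {μ : Measure V}
    (h : IsVagueLim l univ (fun k => (m k).comap Subtype.val) μ) :
    IsVagueLim l V m (μ.map Subtype.val) := by
  have hemb := MeasurableEmbedding.subtype_coe hV.measurableSet
  have image_preimage : ∀ A ⊆ V, Subtype.val '' (Subtype.val ⁻¹' A : Set V) = A := fun A hA => by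
    rw [Subtype.image_preimage_coe, inter_eq_right.2 hA]
  refine ⟨fun O hOV hO => ?_, fun K hKV hK => ?_⟩
  · simpa only [hemb.comap_apply, hemb.map_apply, image_preimage O hOV] using
      h.le_liminf _ (subset_univ _) (hO.preimage continuous_subtype_val)
  · have hK' : IsCompact (Subtype.val ⁻¹' K : Set V) := by
      rwa [Subtype.isCompact_iff, image_preimage K hKV]
    simpa only [hemb.comap_apply, hemb.map_apply, image_preimage K hKV] using
      h.limsup_le _ (subset_univ _) hK'

theorem map_of_ae_mem [OpensMeasurableSpace X] {Y : Type*} [TopologicalSpace Y] [T2Space Y]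
    [MeasurableSpace Y] [BorelSpace Y] (h : IsVagueLim l univ m μ) {f : X → Y} (hf : Continuous f)
    {D : Set X} (hD : ∀ K, IsCompact K → IsCompact (f ⁻¹' K ∩ D))
    (hm : ∀ᶠ k in l, ∀ᵐ x ∂m k, x ∈ D) :
    IsVagueLim l univ (fun k => (m k).map f) (μ.map f) := by
  refine ⟨fun O _ hO => ?_, fun K _ hK => ?_⟩
  · simpa only [Measure.map_apply hf.measurable hO.measurableSet] using
      h.le_liminf _ (subset_univ _) (hO.preimage hf)
  · simp only [Measure.map_apply hf.measurable hK.measurableSet]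
    calc limsup (fun k => m k (f ⁻¹' K)) l
        ≤ limsup (fun k => m k (f ⁻¹' K ∩ D)) l :=
          limsup_le_limsup (hm.mono fun k hk =>
            measure_mono_ae (hk.mono fun x hxD hxK => ⟨hxK, hxD⟩))
      _ ≤ μ (f ⁻¹' K ∩ D) := h.limsup_le _ (subset_univ _) (hD K hK)
      _ ≤ μ (f ⁻¹' K) := measure_mono inter_subset_left

theorem le [OpensMeasurableSpace X] [LocallyCompactSpace X] [l.NeBot] {n : ι → Measure X}
    {ν : Measure X} (hV : IsOpen V) (hm : IsVagueLim l V m μ) (hn : IsVagueLim l V n ν)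
    (hμ : RadonOn V μ) (hν : RadonOn V ν) (h : ∀ᶠ k in l, (m k).restrict V ≤ n k) : μ ≤ ν := by
  have le_on_isCompact : ∀ U, IsOpen U → ∀ K ⊆ U ∩ V, IsCompact K → μ K ≤ ν (U ∩ V) := by
    intro U hU K hKU hK
    obtain ⟨L, hL, hKL, hLU⟩ := exists_compact_between hK (hU.inter hV) hKU
    have hLV : interior L ⊆ V := interior_subset.trans (hLU.trans inter_subset_right)
    calc μ K ≤ μ (interior L) := measure_mono hKL
      _ ≤ liminf (fun k => m k (interior L)) l := hm.le_liminf _ hLV isOpen_interior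
      _ ≤ limsup (fun k => m k (interior L)) l := liminf_le_limsup
      _ ≤ limsup (fun k => n k L) l := by
        refine limsup_le_limsup (h.mono fun k hk => ?_)
        calc m k (interior L)
            = (m k).restrict V (interior L) := (Measure.restrict_eq_self _ hLV).symm
          _ ≤ n k (interior L) := hk _
          _ ≤ n k L := measure_mono interior_subset
      _ ≤ ν L := hn.limsup_le L (hLU.trans inter_subset_right) hL
      _ ≤ ν (U ∩ V) := measure_mono hLU
  refine Measure.le_iff.2 fun A hA => ?_
  calc μ A ≤ μ (A ∩ V) := measure_mono_ae (Filter.Eventually.mono hμ.1 fun x hxV hxA => ⟨hxA, hxV⟩)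
    _ ≤ ν (A ∩ V) := by
      rw [hν.2.2.1 _ inter_subset_right (hA.inter hV.measurableSet)]
      refine le_iInf₂ fun U hU => le_iInf fun hAU => ?_
      refine (measure_mono (subset_inter hAU inter_subset_right)).trans ?_
      rw [hμ.2.1 U hU]
      exact iSup₂_le fun K hKU => iSup_le (le_on_isCompact U hU K hKU)
    _ ≤ ν A := measure_mono inter_subset_left

end IsVagueLim

section UltrafilterLimit

variable {ι : Type*} (U : Ultrafilter ι)

theorem tendsto_limsup_ultrafilter {α : Type*} [CompleteLinearOrder α] [TopologicalSpace α]
    [OrderTopology α] (f : ι → α) : Tendsto f U (𝓝 (limsup f U)) := by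
  have h : Tendsto f U (𝓝 (U.map f).lim) := (U.map f).le_nhds_lim
  rwa [h.limsup_eq]

theorem limsup_add_ultrafilter {α : Type*} [CompleteLinearOrder α] [TopologicalSpace α]
    [OrderTopology α] [Add α] [ContinuousAdd α] (f g : ι → α) :
    limsup (fun k => f k + g k) U = limsup f U + limsup g U :=
  ((tendsto_limsup_ultrafilter U f).add (tendsto_limsup_ultrafilter U g)).limsup_eq

variable {X : Type*} [TopologicalSpace X] [MeasurableSpace X] [BorelSpace X] {m : ι → Measure X}

/-- The limit along an ultrafilter of the masses of compact sets. It is additive because limits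
along an ultrafilter always exist, and its associated measure is a vague limit of `m`. -/
def limsupContent (hm : ∀ K, IsCompact K → limsup (fun k => m k K) U ≠ ⊤) : Content X where
  toFun K := (limsup (fun k => m k K) U).toNNReal
  mono' _ K₂ h := ENNReal.toNNReal_mono (hm K₂ K₂.isCompact)
    (limsup_le_limsup (Eventually.of_forall fun _ => measure_mono h))
  sup_disjoint' K₁ K₂ hd _ h₂ := by
    rw [← ENNReal.toNNReal_add (hm K₁ K₁.isCompact) (hm K₂ K₂.isCompact),
      ← limsup_add_ultrafilter]
    simp only [TopologicalSpace.Compacts.coe_sup, measure_union hd h₂.measurableSet]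
  sup_le' K₁ K₂ := by
    have h₁ := hm K₁ K₁.isCompact
    have h₂ := hm K₂ K₂.isCompact
    rw [← ENNReal.toNNReal_add h₁ h₂]
    refine ENNReal.toNNReal_mono (ENNReal.add_ne_top.2 ⟨h₁, h₂⟩) ?_
    rw [← limsup_add_ultrafilter]
    exact limsup_le_limsup (Eventually.of_forall fun _ => measure_union_le _ _)

theorem limsupContent_apply (hm : ∀ K, IsCompact K → limsup (fun k => m k K) U ≠ ⊤)
    (K : TopologicalSpace.Compacts X) : limsupContent U hm K = limsup (fun k => m k K) U :=
  ENNReal.coe_toNNReal (hm K K.isCompact)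

variable [T2Space X]

theorem isVagueLim_limsupContent_measure
    (hm : ∀ K, IsCompact K → limsup (fun k => m k K) U ≠ ⊤) :
    IsVagueLim U univ m (limsupContent U hm).measure := by
  refine ⟨fun O _ hO => ?_, fun K _ hK => ?_⟩
  · rw [Content.measure_apply _ hO.measurableSet, Content.outerMeasure_of_isOpen _ O hO,
      (tendsto_limsup_ultrafilter U _).liminf_eq]
    refine iSup₂_le fun K hKO => ?_
    rw [limsupContent_apply]
    exact limsup_le_limsup (Eventually.of_forall fun _ => measure_mono hKO)
  · rw [Content.measure_apply _ hK.measurableSet]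
    exact (limsupContent_apply U hm ⟨K, hK⟩).symm.trans_le
      (Content.le_outerMeasure_compacts _ ⟨K, hK⟩)

theorem exists_radonOn_isVagueLim [LocallyCompactSpace X] {V : Set X} (hV : IsOpen V)
    (hm : ∀ K ⊆ V, IsCompact K → limsup (fun k => m k K) U ≠ ⊤) :
    ∃ μ, RadonOn V μ ∧ IsVagueLim U V m μ := by
  have : LocallyCompactSpace V := hV.locallyCompactSpace
  have hm' : ∀ K : Set V, IsCompact K →
      limsup (fun k => (m k).comap Subtype.val K) U ≠ ⊤ := fun K hK => by
    simp only [(MeasurableEmbedding.subtype_coe hV.measurableSet).comap_apply]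
    exact hm _ (Subtype.coe_image_subset V K) (hK.image continuous_subtype_val)
  exact ⟨_, radonOn_map_subtype_val hV.measurableSet (limsupContent U hm').measure,
    (isVagueLim_limsupContent_measure U hm').map_subtype_val hV⟩

end UltrafilterLimit

/-! ### The birth-death plane -/

theorem distDiag_eq (x : P2) : distDiag x = |x.2 - x.1| / 2 := by
  have midpoint_mem : ((x.1 + x.2) / 2, (x.1 + x.2) / 2) ∈ Diag := rfl
  refine le_antisymm ?_ ((Metric.le_infDist ⟨_, midpoint_mem⟩).2 ?_)
  · refine (Metric.infDist_le_dist_of_mem midpoint_mem).trans_eq ?_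
    rw [Prod.dist_eq, Real.dist_eq, Real.dist_eq,
      show x.1 - (x.1 + x.2) / 2 = -((x.2 - x.1) / 2) by ring,
      show x.2 - (x.1 + x.2) / 2 = (x.2 - x.1) / 2 by ring, abs_neg, max_self, abs_div, abs_two]
  · rintro ⟨y, z⟩ (rfl : y = z)
    have triangle : dist x.2 x.1 ≤ dist x.2 y + dist x.1 y := dist_triangle_right _ _ _
    rw [← Real.dist_eq, Prod.dist_eq]
    linarith [le_max_left (dist x.1 y) (dist x.2 y), le_max_right (dist x.1 y) (dist x.2 y)]

theorem distDiag_nonneg (x : P2) : 0 ≤ distDiag x := Metric.infDist_nonneg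

theorem continuous_distDiag : Continuous distDiag := Metric.continuous_infDist_pt Diag

theorem distDiag_le_add_dist (x y : P2) : distDiag x ≤ distDiag y + dist x y :=
  Metric.infDist_le_infDist_add_dist

theorem Wcl_eq : Wcl = {x : P2 | x.1 ≤ x.2} := by
  refine (closure_lt_subset_le continuous_fst continuous_snd).antisymm fun x hx => ?_
  have tendsto_add : Tendsto (fun t : ℝ => (x.1, x.2 + t)) (𝓝[>] 0) (𝓝 x) := by
    refine tendsto_nhdsWithin_of_tendsto_nhds (Continuous.tendsto' (by fun_prop) _ _ ?_)
    rw [add_zero]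
  exact mem_closure_of_tendsto tendsto_add
    (eventually_mem_nhdsWithin.mono fun t ht => lt_of_le_of_lt hx (lt_add_of_pos_right x.2 ht))

theorem isClosed_Wcl : IsClosed Wcl := isClosed_closure

theorem isOpen_Wbd : IsOpen Wbd := isOpen_lt continuous_fst continuous_snd

theorem Wbd_subset_Wcl : Wbd ⊆ Wcl := subset_closure

theorem isOpen_Weps (ε : ℝ) : IsOpen (Weps ε) :=
  isOpen_lt continuous_const (continuous_snd.sub continuous_fst)

theorem Weps_zero : Weps 0 = Wbd := ext fun x => sub_pos (a := x.2) (b := x.1)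

theorem Weps_anti {ε δ : ℝ} (h : ε ≤ δ) : Weps δ ⊆ Weps ε := fun _ hx => lt_of_le_of_lt h hx

theorem Weps_subset_Wbd {ε : ℝ} (hε : 0 ≤ ε) : Weps ε ⊆ Wbd := Weps_zero ▸ Weps_anti hε

theorem mem_Weps_iff {x : P2} (hx : x ∈ Wcl) {ε : ℝ} : x ∈ Weps ε ↔ ε < 2 * distDiag x := by
  rw [Wcl_eq] at hx
  rw [distDiag_eq, abs_of_nonneg (sub_nonneg.2 hx), mul_div_cancel₀ _ two_ne_zero]
  rfl

theorem mem_Wbd_iff {x : P2} (hx : x ∈ Wcl) : x ∈ Wbd ↔ 0 < distDiag x := by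
  rw [← Weps_zero, mem_Weps_iff hx, mul_pos_iff_of_pos_left two_pos]

theorem thickening_Weps_subset (r ε : ℝ) : Metric.thickening r (Weps ε) ⊆ Weps (ε - 2 * r) := by
  intro x hx
  obtain ⟨y, hy, hxy⟩ := Metric.mem_thickening_iff.1 hx
  have hy : ε < y.2 - y.1 := hy
  have h₁ := (abs_lt.1 ((le_max_left _ _).trans_lt hxy)).2
  have h₂ := (abs_lt.1 ((le_max_right _ _).trans_lt hxy)).1
  change ε - 2 * r < x.2 - x.1
  linarith

theorem le_distDiag_of_thickening_subset {A : Set P2} {r : ℝ} (hA : Metric.thickening r A ⊆ Wbd)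
    {x : P2} (hx : x ∈ A) : r ≤ distDiag x := by
  have diag_nonempty : Diag.Nonempty := ⟨(0, 0), rfl⟩
  refine (Metric.le_infDist diag_nonempty).2 fun z hz => ?_
  by_contra! h
  have hzA : z ∈ Metric.thickening r A := Metric.mem_thickening_iff.2 ⟨x, hx, by rwa [dist_comm]⟩
  exact (hA hzA).ne hz

theorem dW_comm (x y : P2) : dW x y = dW y x := by
  simp only [dW, dist_comm, add_comm]

theorem continuous_dW : Continuous fun p : P2 × P2 => dW p.1 p.2 :=
  continuous_dist.min
    ((continuous_distDiag.comp continuous_fst).add (continuous_distDiag.comp continuous_snd))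

theorem isClosed_setOf_dW_le (s : ℝ) :
    IsClosed {p : P2 × P2 | p ∈ Wcl ×ˢ Wcl ∧ dW p.1 p.2 ≤ s} :=
  (isClosed_Wcl.prod isClosed_Wcl).and (isClosed_le continuous_dW continuous_const)

theorem dist_lt_of_dW_lt {x y : P2} {r : ℝ} (h : dW x y < r) (hx : r ≤ distDiag x) :
    dist x y < r :=
  (min_lt_iff.1 h).resolve_right fun h' => by linarith [distDiag_nonneg y]

/-! ### Persistence and transport costs as essential suprema -/

theorem persInf_le_ofReal_iff {μ : Measure P2} {c : ℝ} (hc : 0 ≤ c) :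
    persInf μ ≤ ENNReal.ofReal c ↔ ∀ᵐ x ∂μ, distDiag x ≤ c := by
  simp only [← ENNReal.ofReal_le_ofReal_iff hc]
  exact iSup_msupport_le_iff
    (ENNReal.continuous_ofReal.comp continuous_distDiag).lowerSemicontinuous

theorem costInf_le_iff {π : Measure (P2 × P2)} {c : ℝ≥0∞} :
    costInf π ≤ c ↔ ∀ᵐ p ∂π, ENNReal.ofReal (dW p.1 p.2) ≤ c :=
  iSup_msupport_le_iff (ENNReal.continuous_ofReal.comp continuous_dW).lowerSemicontinuous

theorem persInf_le_ofReal_iff_measure_Weps {μ : Measure P2} (hμ : μ Wbdᶜ = 0) {c : ℝ}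
    (hc : 0 ≤ c) : persInf μ ≤ ENNReal.ofReal c ↔ μ (Weps (2 * c)) = 0 := by
  rw [persInf_le_ofReal_iff hc, measure_eq_zero_iff_ae_notMem]
  refine eventually_congr (Filter.Eventually.mono hμ fun x (hx : x ∈ Wbd) => ?_)
  rw [mem_Weps_iff (Wbd_subset_Wcl hx), not_lt, mul_le_mul_iff_right₀ two_pos]

/-! ### Couplings and mass transfer -/

theorem exists_coupling_of_OT_lt {μ ν : Measure P2} {r : ℝ} (h : OT μ ν < ENNReal.ofReal r) :
    ∃ π, IsCoupling π μ ν ∧ ∀ᵐ p ∂π, p ∈ Wcl ×ˢ Wcl ∧ dW p.1 p.2 < r := by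
  have hr : 0 < r := ENNReal.ofReal_pos.1 (bot_le.trans_lt h)
  simp only [OT, iInf_lt_iff] at h
  obtain ⟨π, hπ, hc⟩ := h
  have mem_Wcl : ∀ᵐ p ∂π, p ∈ Wcl ×ˢ Wcl := hπ.1.1
  refine ⟨π, hπ, ?_⟩
  filter_upwards [mem_Wcl, costInf_le_iff.1 le_rfl] with p hp hpc
  exact ⟨hp, (ENNReal.ofReal_lt_ofReal_iff hr).1 (hpc.trans_lt hc)⟩

theorem isCoupling_iff {π : Measure (P2 × P2)} {μ ν : Measure P2} :
    IsCoupling π μ ν ↔ RadonOn (Wcl ×ˢ Wcl) π ∧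
      π.fst.restrict Wbd = μ.restrict Wbd ∧
      π.snd.restrict Wbd = ν.restrict Wbd := by
  rw [IsCoupling, Measure.restrict_congr_meas isOpen_Wbd.measurableSet,
    Measure.restrict_congr_meas isOpen_Wbd.measurableSet]
  refine and_congr_right fun hπ => and_congr ?_ ?_
  all_goals refine forall₃_congr fun A hAW hA => ?_
  · have prod_eq : A ×ˢ Wcl = Prod.fst ⁻¹' A ∩ Wcl ×ˢ Wcl := by
      rw [← prod_univ, prod_inter_prod, inter_eq_left.2 (hAW.trans Wbd_subset_Wcl), univ_inter]
    rw [Measure.fst_apply hA, prod_eq, measure_inter_conull hπ.1]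
  · have prod_eq : Wcl ×ˢ A = Prod.snd ⁻¹' A ∩ Wcl ×ˢ Wcl := by
      rw [← univ_prod, prod_inter_prod, inter_eq_left.2 (hAW.trans Wbd_subset_Wcl), univ_inter]
    rw [Measure.snd_apply hA, prod_eq, measure_inter_conull hπ.1]

theorem measure_le_measure_thickening_of_OT_lt {μ ν : Measure P2} {r : ℝ}
    (h : OT μ ν < ENNReal.ofReal r) {A : Set P2} (hA : MeasurableSet A)
    (hAr : Metric.thickening r A ⊆ Wbd) : ν A ≤ μ (Metric.thickening r A) := by
  obtain ⟨π, hπ, hae⟩ := exists_coupling_of_OT_lt h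
  have hr : 0 < r := ENNReal.ofReal_pos.1 (bot_le.trans_lt h)
  rw [← hπ.2.1 _ hAr Metric.isOpen_thickening.measurableSet,
    ← hπ.2.2 A ((Metric.self_subset_thickening hr A).trans hAr) hA]
  refine measure_mono_ae (hae.mono fun p hp hpA => ⟨?_, hp.1.2⟩)
  refine Metric.mem_thickening_iff.2 ⟨p.2, hpA.2, ?_⟩
  rw [dist_comm]
  exact dist_lt_of_dW_lt (dW_comm p.1 p.2 ▸ hp.2) (le_distDiag_of_thickening_subset hAr hpA.2)

theorem measure_Weps_le_of_OT_lt {μ ν : Measure P2} {r ε : ℝ} (h : OT μ ν < ENNReal.ofReal r)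
    (hε : 2 * r ≤ ε) : ν (Weps ε) ≤ μ (Weps (ε - 2 * r)) :=
  (measure_le_measure_thickening_of_OT_lt h (isOpen_Weps ε).measurableSet
    ((thickening_Weps_subset r ε).trans (Weps_subset_Wbd (sub_nonneg.2 hε)))).trans
    (measure_mono (thickening_Weps_subset r ε))

theorem mem_Mf_of_tendsto {ι : Type*} {l : Filter ι} [l.NeBot] {u : ι → Measure P2}
    {μ : Measure P2} (hμ : μ ∈ MInf) (hu : ∀ n, u n ∈ Mf)
    (h : Tendsto (fun n => OT (u n) μ) l (𝓝 0)) : μ ∈ Mf := by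
  refine ⟨hμ, fun ε hε => ?_⟩
  obtain ⟨n, hn⟩ := (h.eventually_lt_const
    (ENNReal.ofReal_pos.2 (show 0 < ε / 4 by positivity))).exists
  calc μ (Weps ε) ≤ u n (Weps (ε - 2 * (ε / 4))) := measure_Weps_le_of_OT_lt hn (by linarith)
    _ < ⊤ := (hu n).2 _ (by linarith)

/-! ### Partial plans -/

/-- `σ` is a truncation of `μ` at level `a`: it keeps all the mass of `μ` in `Weps a`, and some of
the mass closer to the diagonal. -/
structure IsTruncation (a : ℝ) (σ μ : Measure P2) : Prop where
  le : σ ≤ μ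
  restrict_le : μ.restrict (Weps a) ≤ σ

/-- The pairs of points at distance at most `r` of each other and at least `s - r` of the diagonal.
For `r < s` this set is contained in `Wbd ×ˢ Wbd`, and both projections are proper on it. -/
def nearPairs (r s : ℝ) : Set (P2 × P2) :=
  {p | p ∈ Wcl ×ˢ Wcl ∧ dist p.1 p.2 ≤ r ∧ s - r ≤ distDiag p.1 ∧ s - r ≤ distDiag p.2}

/-- `ρ` matches `μ` and `ν` at scale `r`, up to mass at distance at most `s` of the diagonal. -/
structure IsPartialPlan (r s : ℝ) (ρ : Measure (P2 × P2)) (μ ν : Measure P2) : Prop where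
  near : ∀ᵐ p ∂ρ, p ∈ nearPairs r s
  fst : IsTruncation (2 * s) ρ.fst μ
  snd : IsTruncation (2 * s) ρ.snd ν

theorem isClosed_nearPairs (r s : ℝ) : IsClosed (nearPairs r s) :=
  (isClosed_Wcl.prod isClosed_Wcl).and <| (isClosed_le continuous_dist continuous_const).and <|
    (isClosed_le continuous_const (continuous_distDiag.comp continuous_fst)).and
      (isClosed_le continuous_const (continuous_distDiag.comp continuous_snd))

theorem nearPairs_subset_prod_Wbd {r s : ℝ} (hrs : r < s) : nearPairs r s ⊆ Wbd ×ˢ Wbd :=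
  fun _ hp => ⟨(mem_Wbd_iff hp.1.1).2 ((sub_pos.2 hrs).trans_le hp.2.2.1),
    (mem_Wbd_iff hp.1.2).2 ((sub_pos.2 hrs).trans_le hp.2.2.2)⟩

theorem isCompact_fst_preimage_inter_nearPairs (r s : ℝ) {K : Set P2} (hK : IsCompact K) :
    IsCompact (Prod.fst ⁻¹' K ∩ nearPairs r s) := by
  refine (hK.prod (hK.cthickening (r := r))).of_isClosed_subset
    ((hK.isClosed.preimage continuous_fst).inter (isClosed_nearPairs r s)) ?_
  rintro p ⟨hpK, -, hpr, -⟩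
  exact ⟨hpK, Metric.mem_cthickening_of_dist_le p.2 p.1 r K hpK (dist_comm p.1 p.2 ▸ hpr)⟩

theorem isCompact_snd_preimage_inter_nearPairs (r s : ℝ) {K : Set P2} (hK : IsCompact K) :
    IsCompact (Prod.snd ⁻¹' K ∩ nearPairs r s) := by
  refine ((hK.cthickening (r := r)).prod hK).of_isClosed_subset
    ((hK.isClosed.preimage continuous_snd).inter (isClosed_nearPairs r s)) ?_
  rintro p ⟨hpK, -, hpr, -⟩
  exact ⟨Metric.mem_cthickening_of_dist_le p.1 p.2 r K hpK hpr, hpK⟩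

theorem mem_nearPairs_of_dW_lt {r s : ℝ} (hrs : r ≤ s) {p : P2 × P2} (hp : p ∈ Wcl ×ˢ Wcl)
    (hpr : dW p.1 p.2 < r) (hps : s < distDiag p.1 ∨ s < distDiag p.2) : p ∈ nearPairs r s := by
  have hdist : dist p.1 p.2 < r := by
    rcases hps with h | h
    · exact dist_lt_of_dW_lt hpr (hrs.trans h.le)
    · rw [dist_comm]
      exact dist_lt_of_dW_lt (dW_comm p.1 p.2 ▸ hpr) (hrs.trans h.le)
  have h₁ := distDiag_le_add_dist p.1 p.2
  have h₂ := distDiag_le_add_dist p.2 p.1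
  rw [dist_comm] at h₂
  refine ⟨hp, hdist.le, ?_⟩
  rcases hps with h | h <;> constructor <;> linarith [dist_nonneg.trans_lt hdist]

theorem isTruncation_map_restrict {Y : Type*} [MeasurableSpace Y] {π : Measure Y} {μ : Measure P2}
    {f : Y → P2} (hf : Measurable f) (hπ : (π.map f).restrict Wbd = μ.restrict Wbd) {T : Set Y}
    {a : ℝ} (ha : 0 ≤ a) (haT : f ⁻¹' Weps a ⊆ T) (hTW : ∀ᵐ p ∂π.restrict T, f p ∈ Wbd) :
    IsTruncation a ((π.restrict T).map f) μ where
  le := calc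
    (π.restrict T).map f = ((π.restrict T).map f).restrict Wbd :=
      (Measure.restrict_eq_self_of_ae_mem
        ((ae_map_iff hf.aemeasurable isOpen_Wbd.measurableSet).2 hTW)).symm
    _ ≤ (π.map f).restrict Wbd :=
      Measure.restrict_mono subset_rfl (Measure.map_mono Measure.restrict_le_self hf)
    _ = μ.restrict Wbd := hπ
    _ ≤ μ := Measure.restrict_le_self
  restrict_le := calc
    μ.restrict (Weps a) = (π.map f).restrict (Weps a) := by
      rw [← Measure.restrict_restrict_of_subset (Weps_subset_Wbd ha), ← hπ,
        Measure.restrict_restrict_of_subset (Weps_subset_Wbd ha)]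
    _ = (π.restrict (f ⁻¹' Weps a)).map f := Measure.restrict_map hf (isOpen_Weps a).measurableSet
    _ ≤ (π.restrict T).map f := Measure.map_mono (Measure.restrict_mono haT le_rfl) hf

theorem exists_isPartialPlan_of_OT_lt {μ ν : Measure P2} {r s : ℝ} (hrs : r < s)
    (h : OT μ ν < ENNReal.ofReal r) : ∃ ρ, IsPartialPlan r s ρ μ ν := by
  have hs : 0 ≤ 2 * s := by linarith [ENNReal.ofReal_pos.1 (bot_le.trans_lt h)]
  obtain ⟨π, hπ, hae⟩ := exists_coupling_of_OT_lt h
  obtain ⟨-, hfst, hsnd⟩ := isCoupling_iff.1 hπ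
  let T : Set (P2 × P2) := Prod.fst ⁻¹' Weps (2 * s) ∪ Prod.snd ⁻¹' Weps (2 * s)
  have hT : MeasurableSet T := ((isOpen_Weps _).measurableSet.preimage measurable_fst).union
    ((isOpen_Weps _).measurableSet.preimage measurable_snd)
  have near : ∀ᵐ p ∂π.restrict T, p ∈ nearPairs r s := by
    refine (ae_restrict_iff' hT).2 (hae.mono fun p hp hpT => ?_)
    refine mem_nearPairs_of_dW_lt hrs.le hp.1 hp.2 (hpT.imp (fun h => ?_) (fun h => ?_))
    · exact (mul_lt_mul_iff_right₀ two_pos).1 ((mem_Weps_iff hp.1.1).1 h)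
    · exact (mul_lt_mul_iff_right₀ two_pos).1 ((mem_Weps_iff hp.1.2).1 h)
  have mem_Wbd := near.mono fun p hp => nearPairs_subset_prod_Wbd hrs hp
  exact ⟨π.restrict T, near,
    isTruncation_map_restrict measurable_fst hfst hs subset_union_left
      (mem_Wbd.mono fun _ => And.left),
    isTruncation_map_restrict measurable_snd hsnd hs subset_union_right
      (mem_Wbd.mono fun _ => And.right)⟩

/-! ### Completing a partial plan -/

namespace IsTruncation

variable {a : ℝ} {σ μ : Measure P2}

theorem sub_add_cancel (h : IsTruncation a σ μ) (hμ : RadonOn Wbd μ) : μ - σ + σ = μ := by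
  have := hμ.sigmaFinite isOpen_Wbd.isLocallyClosed
  have := Measure.sigmaFinite_of_le μ h.le
  exact measure_sub_add_cancel_of_le h.le

theorem ae_sub_mem_Wbd (hμ : RadonOn Wbd μ) : ∀ᵐ x ∂(μ - σ), x ∈ Wbd :=
  Measure.absolutelyContinuous_of_le Measure.sub_le hμ.1

theorem ae_sub_distDiag_le (h : IsTruncation a σ μ) (hμ : RadonOn Wbd μ) :
    ∀ᵐ x ∂(μ - σ), 2 * distDiag x ≤ a := by
  have measure_Weps : (μ - σ) (Weps a) = 0 :=
    Measure.sub_apply_eq_zero_of_restrict_le_restrict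
      (by simpa only [Measure.restrict_restrict_of_subset subset_rfl] using
        Measure.restrict_mono_measure h.restrict_le (Weps a)) (isOpen_Weps a).measurableSet
  filter_upwards [measure_eq_zero_iff_ae_notMem.1 measure_Weps, ae_sub_mem_Wbd hμ] with x hxa hx
  rwa [mem_Weps_iff (Wbd_subset_Wcl hx), not_lt] at hxa

end IsTruncation

/-- A map from the birth-death plane to the diagonal that is proper: it sends the points close to
the diagonal far away, so that the mass that accumulates there stays locally finite. -/
def escape (x : P2) : P2 := (‖x‖ + (distDiag x)⁻¹, ‖x‖ + (distDiag x)⁻¹)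

theorem measurable_escape : Measurable escape := by
  have := continuous_distDiag.measurable
  unfold escape
  fun_prop

theorem distDiag_escape (x : P2) : distDiag (escape x) = 0 :=
  Metric.infDist_zero_of_mem rfl

theorem escape_mem_Wcl (x : P2) : escape x ∈ Wcl := by
  rw [Wcl_eq]
  exact le_refl (‖x‖ + (distDiag x)⁻¹)

theorem escape_notMem_Wbd (x : P2) : escape x ∉ Wbd := lt_irrefl (‖x‖ + (distDiag x)⁻¹)

theorem exists_isCompact_Wbd_inter_escape_preimage_subset {K : Set P2} (hK : IsCompact K) :
    ∃ C ⊆ Wbd, IsCompact C ∧ Wbd ∩ escape ⁻¹' K ⊆ C := by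
  obtain ⟨R, hR, hKR⟩ := hK.isBounded.exists_pos_norm_le
  refine ⟨Metric.closedBall 0 R ∩ (Wcl ∩ {x | R⁻¹ ≤ distDiag x}), ?_, ?_, ?_⟩
  · rintro x ⟨-, hx, hxR⟩
    exact (mem_Wbd_iff hx).2 ((inv_pos.2 hR).trans_le hxR)
  · exact (isCompact_closedBall 0 R).inter_right
      (isClosed_Wcl.inter (isClosed_le continuous_const continuous_distDiag))
  · rintro x ⟨hx, hxK⟩
    have hpos : 0 < distDiag x := (mem_Wbd_iff (Wbd_subset_Wcl hx)).1 hx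
    have hle : ‖x‖ + (distDiag x)⁻¹ ≤ R :=
      (le_abs_self _).trans ((norm_fst_le (escape x)).trans (hKR _ hxK))
    refine ⟨mem_closedBall_zero_iff.2 ?_, Wbd_subset_Wcl hx, inv_le_of_inv_le₀ hpos ?_⟩
    · linarith [inv_pos.2 hpos]
    · linarith [norm_nonneg x]

/-- The plan that sends all the mass of `α` to the diagonal, along `escape`. -/
def toDiag (α : Measure P2) : Measure (P2 × P2) := α.map fun x => (x, escape x)

section toDiag

variable {α : Measure P2}

theorem measurable_prodMk_escape : Measurable fun x => (x, escape x) :=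
  measurable_id.prodMk measurable_escape

theorem fst_toDiag (α : Measure P2) : (toDiag α).fst = α :=
  (Measure.fst_map_prodMk measurable_escape).trans Measure.map_id

theorem restrict_snd_toDiag (α : Measure P2) : (toDiag α).snd.restrict Wbd = 0 := by
  have snd_toDiag : (toDiag α).snd = α.map escape := Measure.snd_map_prodMk measurable_id
  rw [snd_toDiag, Measure.restrict_eq_zero,
    Measure.map_apply measurable_escape isOpen_Wbd.measurableSet]
  exact measure_mono_null escape_notMem_Wbd measure_empty

theorem toDiag_lt_top (hα : RadonOn Wbd α) {K : Set (P2 × P2)} (hK : IsCompact K) :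
    toDiag α K < ⊤ := by
  obtain ⟨C, hCW, hC, hKC⟩ :=
    exists_isCompact_Wbd_inter_escape_preimage_subset (hK.image continuous_snd)
  refine lt_of_le_of_lt ?_ (hα.2.2.2 C hCW hC)
  rw [toDiag, Measure.map_apply measurable_prodMk_escape hK.measurableSet]
  exact measure_mono_ae (Filter.Eventually.mono hα.1 fun x hx hxK => hKC ⟨hx, _, hxK, rfl⟩)

theorem ae_toDiag_dW_le {s : ℝ} (hα : ∀ᵐ x ∂α, x ∈ Wbd) (hαs : ∀ᵐ x ∂α, distDiag x ≤ s) :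
    ∀ᵐ p ∂toDiag α, p ∈ Wcl ×ˢ Wcl ∧ dW p.1 p.2 ≤ s := by
  refine (ae_map_iff measurable_prodMk_escape.aemeasurable
    (isClosed_setOf_dW_le s).measurableSet).2 ?_
  filter_upwards [hα, hαs] with x hx hxs
  refine ⟨⟨Wbd_subset_Wcl hx, escape_mem_Wcl x⟩, (min_le_right _ _).trans ?_⟩
  rwa [distDiag_escape, add_zero]

end toDiag

/-- The plan that completes a partial plan `ρ` between `μ` and `ν` by sending to the diagonal the
parts of `μ` and of `ν` that `ρ` leaves out. -/
def completion (ρ : Measure (P2 × P2)) (μ ν : Measure P2) : Measure (P2 × P2) :=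
  ρ + toDiag (μ - ρ.fst) + (toDiag (ν - ρ.snd)).map Prod.swap

section completion

variable {r s : ℝ} {ρ : Measure (P2 × P2)} {μ ν : Measure P2}

theorem completion_lt_top (hμ : RadonOn Wbd μ) (hν : RadonOn Wbd ν)
    (hρ : ∀ K, IsCompact K → ρ K < ⊤) {K : Set (P2 × P2)} (hK : IsCompact K) :
    completion ρ μ ν K < ⊤ := by
  have hWbd := isOpen_Wbd.isLocallyClosed
  have hK' : IsCompact (Prod.swap ⁻¹' K) := by
    rw [← image_swap_eq_preimage_swap]
    exact hK.image continuous_swap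
  rw [completion, Measure.add_apply, Measure.add_apply,
    Measure.map_apply measurable_swap hK.measurableSet]
  exact ENNReal.add_lt_top.2 ⟨ENNReal.add_lt_top.2 ⟨hρ K hK,
    toDiag_lt_top (hμ.of_le hWbd Measure.sub_le) hK⟩,
    toDiag_lt_top (hν.of_le hWbd Measure.sub_le) hK'⟩

namespace IsPartialPlan

theorem ae_completion (h : IsPartialPlan r s ρ μ ν) (hrs : r ≤ s) (hμ : RadonOn Wbd μ)
    (hν : RadonOn Wbd ν) : ∀ᵐ p ∂completion ρ μ ν, p ∈ Wcl ×ˢ Wcl ∧ dW p.1 p.2 ≤ s := by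
  have ae_toDiag_sub : ∀ {σ μ : Measure P2}, IsTruncation (2 * s) σ μ → RadonOn Wbd μ →
      ∀ᵐ p ∂toDiag (μ - σ), p ∈ Wcl ×ˢ Wcl ∧ dW p.1 p.2 ≤ s := fun hσ hμ =>
    ae_toDiag_dW_le (IsTruncation.ae_sub_mem_Wbd hμ) ((hσ.ae_sub_distDiag_le hμ).mono
      fun x hx => (mul_le_mul_iff_right₀ two_pos).1 hx)
  rw [completion, ae_add_measure_iff, ae_add_measure_iff, ae_map_iff measurable_swap.aemeasurable
    (isClosed_setOf_dW_le s).measurableSet]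
  refine ⟨⟨?_, ae_toDiag_sub h.fst hμ⟩, ?_⟩
  · exact h.near.mono fun p hp => ⟨hp.1, (min_le_left _ _).trans (hp.2.1.trans hrs)⟩
  · exact (ae_toDiag_sub h.snd hν).mono fun p hp => ⟨hp.1.symm, dW_comm p.1 p.2 ▸ hp.2⟩

theorem restrict_fst_completion (h : IsPartialPlan r s ρ μ ν) (hμ : RadonOn Wbd μ) :
    (completion ρ μ ν).fst.restrict Wbd = μ.restrict Wbd := by
  rw [completion, Measure.fst_add, Measure.fst_add, fst_toDiag, Measure.fst_map_swap,
    Measure.restrict_add, restrict_snd_toDiag, add_zero, add_comm, h.fst.sub_add_cancel hμ]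

theorem restrict_snd_completion (h : IsPartialPlan r s ρ μ ν) (hν : RadonOn Wbd ν) :
    (completion ρ μ ν).snd.restrict Wbd = ν.restrict Wbd := by
  rw [completion, Measure.snd_add, Measure.snd_add, Measure.snd_map_swap, fst_toDiag, add_assoc,
    add_left_comm, Measure.restrict_add, restrict_snd_toDiag, zero_add, add_comm,
    h.snd.sub_add_cancel hν]

theorem isCoupling_completion (h : IsPartialPlan r s ρ μ ν) (hrs : r ≤ s)
    (hρ : ∀ K, IsCompact K → ρ K < ⊤) (hμ : RadonOn Wbd μ) (hν : RadonOn Wbd ν) :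
    IsCoupling (completion ρ μ ν) μ ν :=
  isCoupling_iff.2 ⟨radonOn_of_isCompact_lt_top (isClosed_Wcl.prod isClosed_Wcl).isLocallyClosed
    ((h.ae_completion hrs hμ hν).mono fun _ => And.left) fun _ _ => completion_lt_top hμ hν hρ,
    h.restrict_fst_completion hμ, h.restrict_snd_completion hν⟩

theorem OT_le (h : IsPartialPlan r s ρ μ ν) (hrs : r ≤ s) (hρ : ∀ K, IsCompact K → ρ K < ⊤)
    (hμ : RadonOn Wbd μ) (hν : RadonOn Wbd ν) : OT μ ν ≤ ENNReal.ofReal s :=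
  iInf₂_le_of_le _ (h.isCoupling_completion hrs hρ hμ hν) (costInf_le_iff.2
    ((h.ae_completion hrs hμ hν).mono fun _ hp => ENNReal.ofReal_le_ofReal hp.2))

end IsPartialPlan

end completion

/-! ### Lower semicontinuity of the transport distance -/

theorem IsTruncation.of_isVagueLim {ι : Type*} {l : Filter ι} [l.NeBot] {a : ℝ} (ha : 0 ≤ a)
    {σ m : ι → Measure P2} {σ' μ : Measure P2} (h : ∀ᶠ k in l, IsTruncation a (σ k) (m k))
    (hσ : IsVagueLim l Wbd σ σ') (hσ' : RadonOn Wbd σ') (hm : IsVagueLim l Wbd m μ)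
    (hμ : RadonOn Wbd μ) : IsTruncation a σ' μ where
  le := hσ.le isOpen_Wbd hm hσ' hμ (h.mono fun _ hk => Measure.restrict_le_self.trans hk.le)
  restrict_le := by
    have hW : Weps a ⊆ Wbd := Weps_subset_Wbd ha
    have radonOn_Weps : ∀ {ν : Measure P2}, RadonOn Wbd ν →
        RadonOn (Weps a) (ν.restrict (Weps a)) := fun hν =>
      radonOn_restrict (isOpen_Weps a).isLocallyClosed fun K hK => hν.2.2.2 K (hK.trans hW)
    exact ((hm.mono hW).restrict.le (isOpen_Weps a) (hσ.mono hW).restrict (radonOn_Weps hμ)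
      (radonOn_Weps hσ') (h.mono fun _ hk => hk.restrict_le)).trans Measure.restrict_le_self

theorem IsTruncation.map_of_isVagueLim {ι Y : Type*} [TopologicalSpace Y] [MeasurableSpace Y]
    [OpensMeasurableSpace Y] {l : Filter ι} [l.NeBot] {ρ : ι → Measure Y} {ρ' : Measure Y}
    (hρ : IsVagueLim l univ ρ ρ') (hρ' : ∀ K, IsCompact K → ρ' K < ⊤) {D : Set Y}
    (hD : IsClosed D) (hρD : ∀ᶠ k in l, ∀ᵐ p ∂ρ k, p ∈ D) {f : Y → P2} (hf : Continuous f)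
    (hfD : MapsTo f D Wbd) (hfK : ∀ K, IsCompact K → IsCompact (f ⁻¹' K ∩ D))
    {m : ι → Measure P2} {μ : Measure P2} (hm : IsVagueLim l Wbd m μ) (hμ : RadonOn Wbd μ)
    {a : ℝ} (ha : 0 ≤ a) (h : ∀ᶠ k in l, IsTruncation a ((ρ k).map f) (m k)) :
    IsTruncation a (ρ'.map f) μ := by
  have ae_mem : ∀ᵐ p ∂ρ', p ∈ D := hρ.ae_mem_of_isClosed hD hρD
  refine .of_isVagueLim ha h ((hρ.map_of_ae_mem hf hfK hρD).mono (subset_univ _)) ?_ hm hμ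
  refine radonOn_of_isCompact_lt_top isOpen_Wbd.isLocallyClosed ?_ fun K _ hK => ?_
  · exact (ae_map_iff hf.measurable.aemeasurable isOpen_Wbd.measurableSet).2 (ae_mem.mono hfD)
  · rw [Measure.map_apply hf.measurable hK.measurableSet, ← measure_inter_conull ae_mem]
    exact hρ' _ (hfK K hK)

theorem IsPartialPlan.measure_le {r s : ℝ} {ρ : Measure (P2 × P2)} {μ ν : Measure P2}
    (h : IsPartialPlan r s ρ μ ν) {K : Set (P2 × P2)} (hK : IsCompact K) :
    ρ K ≤ μ (Prod.fst '' (K ∩ nearPairs r s)) := by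
  have hK' : IsCompact (Prod.fst '' (K ∩ nearPairs r s)) :=
    (hK.inter_right (isClosed_nearPairs r s)).image continuous_fst
  calc ρ K = ρ (K ∩ nearPairs r s) := (measure_inter_conull h.near).symm
    _ ≤ ρ (Prod.fst ⁻¹' (Prod.fst '' (K ∩ nearPairs r s))) :=
      measure_mono (subset_preimage_image _ _)
    _ = ρ.fst (Prod.fst '' (K ∩ nearPairs r s)) := (Measure.fst_apply hK'.measurableSet).symm
    _ ≤ μ (Prod.fst '' (K ∩ nearPairs r s)) := h.fst.le _

section LowerSemicontinuity

variable {ι : Type*} {m n : ι → Measure P2} {μ ν : Measure P2}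

theorem exists_isPartialPlan_of_isVagueLim (U : Ultrafilter ι) (hm : IsVagueLim U Wbd m μ)
    (hn : IsVagueLim U Wbd n ν) (hμ : RadonOn Wbd μ) (hν : RadonOn Wbd ν) {r s : ℝ} (hs : 0 ≤ s)
    (hrs : r < s) (h : ∀ᶠ k in U, ∃ ρ, IsPartialPlan r s ρ (m k) (n k)) :
    ∃ ρ, RadonOn univ ρ ∧ IsPartialPlan r s ρ μ ν := by
  obtain ⟨ρ, hρ⟩ := h.choice
  have limsup_ne_top : ∀ K ⊆ univ, IsCompact K → limsup (fun k => ρ k K) U ≠ ⊤ := by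
    intro K _ hK
    have image_subset_Wbd : Prod.fst '' (K ∩ nearPairs r s) ⊆ Wbd :=
      image_subset_iff.2 fun p hp => (nearPairs_subset_prod_Wbd hrs hp.2).1
    have hK' : IsCompact (Prod.fst '' (K ∩ nearPairs r s)) :=
      (hK.inter_right (isClosed_nearPairs r s)).image continuous_fst
    exact ((limsup_le_limsup (hρ.mono fun k hk => hk.measure_le hK)).trans
      (hm.limsup_le _ image_subset_Wbd hK')).trans_lt (hμ.2.2.2 _ image_subset_Wbd hK') |>.ne
  obtain ⟨ρ', hρ'R, hρ'⟩ := exists_radonOn_isVagueLim U isOpen_univ limsup_ne_top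
  have near := hρ.mono fun k hk => hk.near
  have hs' : 0 ≤ 2 * s := by positivity
  refine ⟨ρ', hρ'R, hρ'.ae_mem_of_isClosed (isClosed_nearPairs r s) near, ?_, ?_⟩
  · exact .map_of_isVagueLim hρ' (fun K => hρ'R.2.2.2 K (subset_univ K)) (isClosed_nearPairs r s)
      near continuous_fst (fun p hp => (nearPairs_subset_prod_Wbd hrs hp).1)
      (fun K => isCompact_fst_preimage_inter_nearPairs r s) hm hμ hs' (hρ.mono fun k hk => hk.fst)
  · exact .map_of_isVagueLim hρ' (fun K => hρ'R.2.2.2 K (subset_univ K)) (isClosed_nearPairs r s)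
      near continuous_snd (fun p hp => (nearPairs_subset_prod_Wbd hrs hp).2)
      (fun K => isCompact_snd_preimage_inter_nearPairs r s) hn hν hs' (hρ.mono fun k hk => hk.snd)

theorem OT_le_liminf_of_isVagueLim {l : Filter ι} (hm : IsVagueLim l Wbd m μ)
    (hn : IsVagueLim l Wbd n ν) (hμ : RadonOn Wbd μ) (hν : RadonOn Wbd ν) :
    OT μ ν ≤ liminf (fun k => OT (m k) (n k)) l := by
  refine le_of_forall_gt_imp_ge_of_dense fun c hc => ?_
  obtain ⟨s, hs, hls, hsc⟩ := ENNReal.lt_iff_exists_real_btwn.1 hc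
  obtain ⟨r, -, hlr, hrs⟩ := ENNReal.lt_iff_exists_real_btwn.1 hls
  have hrs : r < s := ENNReal.ofReal_lt_ofReal_iff'.1 hrs |>.1
  have frequently_OT_lt : ∃ᶠ k in l, OT (m k) (n k) < ENNReal.ofReal r :=
    frequently_lt_of_liminf_lt (by isBoundedDefault) hlr
  have := frequently_iff_neBot.1 frequently_OT_lt
  have hU := Ultrafilter.of_le (l ⊓ 𝓟 {k | OT (m k) (n k) < ENNReal.ofReal r})
  set U := Ultrafilter.of (l ⊓ 𝓟 {k | OT (m k) (n k) < ENNReal.ofReal r})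
  have eventually_OT_lt : ∀ᶠ k in U, OT (m k) (n k) < ENNReal.ofReal r :=
    le_principal_iff.1 (hU.trans inf_le_right)
  obtain ⟨ρ, hρR, hρ⟩ := exists_isPartialPlan_of_isVagueLim U
    (hm.mono_filter (hU.trans inf_le_left)) (hn.mono_filter (hU.trans inf_le_left)) hμ hν hs hrs
    (eventually_OT_lt.mono fun k => exists_isPartialPlan_of_OT_lt hrs)
  exact (hρ.OT_le hrs.le (fun K => hρR.2.2.2 K (subset_univ K)) hμ hν).trans hsc.le

end LowerSemicontinuity

/-! ### Completeness -/

theorem exists_isVagueLim_of_eventually_OT_lt {ι : Type*} (U : Ultrafilter ι) {m : ι → Measure P2}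
    (h : ∀ ε : ℝ, 0 < ε → ∃ ν, RadonOn Wbd ν ∧ ∀ᶠ k in U, OT ν (m k) < ENNReal.ofReal ε) :
    ∃ μ, RadonOn Wbd μ ∧ IsVagueLim U Wbd m μ := by
  refine exists_radonOn_isVagueLim U isOpen_Wbd fun K hKW hK => ne_of_lt ?_
  obtain ⟨δ, hδ, hδW⟩ := hK.exists_cthickening_subset_open isOpen_Wbd hKW
  have thickening_subset := Metric.thickening_subset_cthickening δ K
  obtain ⟨ν, hν, hνm⟩ := h δ hδ
  calc limsup (fun k => m k K) U ≤ ν (Metric.thickening δ K) :=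
        limsup_le_of_le (by isBoundedDefault) (hνm.mono fun k hk =>
          measure_le_measure_thickening_of_OT_lt hk hK.measurableSet (thickening_subset.trans hδW))
    _ ≤ ν (Metric.cthickening δ K) := measure_mono thickening_subset
    _ < ⊤ := hν.2.2.2 _ hδW hK.cthickening

theorem persInf_lt_top_of_isVagueLim {ι : Type*} {l : Filter ι} [l.NeBot] {m : ι → Measure P2}
    {μ ν : Measure P2} (hμ : RadonOn Wbd μ) (hm : IsVagueLim l Wbd m μ) (hν : ν ∈ MInf) {r : ℝ}
    (h : ∀ᶠ k in l, OT ν (m k) < ENNReal.ofReal r) : persInf μ < ⊤ := by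
  obtain ⟨k, hk⟩ := h.exists
  have hr : 0 < r := ENNReal.ofReal_pos.1 (bot_le.trans_lt hk)
  obtain ⟨c, hc, hνc⟩ : ∃ c : ℝ, 0 ≤ c ∧ persInf ν ≤ ENNReal.ofReal c :=
    ⟨_, ENNReal.toReal_nonneg, (ENNReal.ofReal_toReal hν.2.ne).ge⟩
  have measure_ν : ν (Weps (2 * c)) = 0 := (persInf_le_ofReal_iff_measure_Weps hν.1.1 hc).1 hνc
  have measure_m : ∀ᶠ k in l, m k (Weps (2 * (c + r))) ≤ 0 := h.mono fun k hk => by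
    have hle := measure_Weps_le_of_OT_lt (ε := 2 * (c + r)) hk (by linarith)
    rwa [show 2 * (c + r) - 2 * r = 2 * c by ring, measure_ν] at hle
  have measure_μ : μ (Weps (2 * (c + r))) = 0 :=
    nonpos_iff_eq_zero.1 (hm.measure_le (Weps_subset_Wbd (by positivity)) (isOpen_Weps _) measure_m)
  exact ((persInf_le_ofReal_iff_measure_Weps hμ.1 (by positivity)).2 measure_μ).trans_lt
    ENNReal.ofReal_lt_top

theorem exists_tendsto_of_cauchy {u : ℕ → Measure P2} (hu : ∀ n, u n ∈ MInf)
    (hc : ∀ ε : ℝ, 0 < ε → ∃ N : ℕ, ∀ m ≥ N, ∀ n ≥ N, OT (u m) (u n) < ENNReal.ofReal ε) :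
    ∃ μ ∈ MInf, Tendsto (fun n => OT (u n) μ) atTop (𝓝 0) := by
  have hU : (hyperfilter ℕ : Filter ℕ) ≤ atTop := Nat.hyperfilter_le_atTop
  have eventually_lt : ∀ ε : ℝ, 0 < ε →
      ∃ N, ∀ n ≥ N, ∀ᶠ k in (hyperfilter ℕ : Filter ℕ), OT (u n) (u k) < ENNReal.ofReal ε :=
    fun ε hε => (hc ε hε).imp fun N hN n hn => hU (eventually_atTop.2 ⟨N, hN n hn⟩)
  obtain ⟨μ, hμ, hlim⟩ := exists_isVagueLim_of_eventually_OT_lt (hyperfilter ℕ) fun ε hε => by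
    obtain ⟨N, hN⟩ := eventually_lt ε hε
    exact ⟨u N, (hu N).1, hN N le_rfl⟩
  refine ⟨μ, ⟨hμ, ?_⟩, ?_⟩
  · obtain ⟨N, hN⟩ := eventually_lt 1 one_pos
    exact persInf_lt_top_of_isVagueLim hμ hlim (hu N) (hN N le_rfl)
  · refine ENNReal.tendsto_atTop_zero.2 fun ε hε => ?_
    obtain ⟨δ, -, hδ, hδε⟩ := ENNReal.lt_iff_exists_real_btwn.1 hε
    obtain ⟨N, hN⟩ := eventually_lt δ (ENNReal.ofReal_pos.1 hδ)
    refine ⟨N, fun n hn => ?_⟩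
    calc OT (u n) μ ≤ liminf (fun k => OT (u n) (u k)) (hyperfilter ℕ) :=
          OT_le_liminf_of_isVagueLim (.const _ _ _) hlim (hu n).1 hμ
      _ ≤ ENNReal.ofReal δ :=
        liminf_le_of_frequently_le ((hN n hn).mono fun _ => le_of_lt).frequently
      _ ≤ ε := hδε.le

/-- `M_f^∞` is closed in the complete metric space `(M^∞, OT_∞)`
(formulated sequentially), and hence `(M_f^∞, OT_∞)` is complete: every Cauchy sequence
in `M_f^∞` converges, in the distance `OT_∞`, to an element of `M_f^∞`. -/
theorem Mf_closed_and_complete :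
    (∀ μ ∈ MInf, ∀ u : ℕ → Measure P2, (∀ n, u n ∈ Mf) →
      Tendsto (fun n => OT (u n) μ) atTop (𝓝 0) → μ ∈ Mf) ∧
    (∀ u : ℕ → Measure P2, (∀ n, u n ∈ Mf) →
      (∀ ε : ℝ, 0 < ε → ∃ N : ℕ, ∀ m ≥ N, ∀ n ≥ N, OT (u m) (u n) < ENNReal.ofReal ε) →
      ∃ μ ∈ Mf, Tendsto (fun n => OT (u n) μ) atTop (𝓝 0)) := by
  refine ⟨fun μ hμ u hu h => mem_Mf_of_tendsto hμ hu h, fun u hu hc => ?_⟩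
  obtain ⟨μ, hμ, h⟩ := exists_tendsto_of_cauchy (fun n => (hu n).1) hc
  exact ⟨μ, mem_Mf_of_tendsto hμ hu h, h⟩
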